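/- Let h, c, p, s be smooth with c nowhere vanishing and h''' not identically zero. (a) For any smooth functions f, f₁, f₂ of one variable, the functional S_f = S₀ − H^ε_f is conserved up to O(ε⁴) along the PDE (eveq). (b) Let φ be a smooth function, strictly monotone on an interval (x_−, x_+) with c(φ(x)) ≠ 0 there, let f satisfy c(φ(x))·f'(φ(x)) = x for all x ∈ (x_−, x_+), and let f₁ satisfy f₁'(v) = (1/(2c(v)))·(d²/dv²)( c(v) / (c(v)f'(v))' ). Then the variational derivative δS_f/δu, evaluated at t = 0 and at u = φ(x), is O(ε⁴), i.e. its ε⁰- and ε²-coefficients vanish for all x ∈ (x_−, x_+). -/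

import Mathlib

open Set

noncomputable section

/-- Partial derivative of a jet density with respect to the k-th jet variable `u^(k)`. -/
def pderivJet (P : (ℕ → ℝ) → ℝ) (k : ℕ) (v : ℕ → ℝ) : ℝ :=
  deriv (fun y => P (Function.update v k y)) (v k)

/-- Total x-derivative of a jet density (no explicit x,t dependence). -/
def totalDer (P : (ℕ → ℝ) → ℝ) : (ℕ → ℝ) → ℝ :=
  fun v => ∑' k : ℕ, v (k + 1) * pderivJet P k v

/-- Euler-Lagrange operator `E(P) = Σ (-1)^k (d/dx)^k ∂P/∂u^(k)`. -/
def EulerOp (P : (ℕ → ℝ) → ℝ) : (ℕ → ℝ) → ℝ :=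
  fun v => ∑' k : ℕ, (-1 : ℝ) ^ k * (totalDer^[k] (pderivJet P k)) v

/-- Total x-derivative for densities with explicit x,t dependence. -/
def totalDerXT (P : ℝ → ℝ → (ℕ → ℝ) → ℝ) : ℝ → ℝ → (ℕ → ℝ) → ℝ :=
  fun x t v => deriv (fun y => P y t v) x + ∑' k : ℕ, v (k + 1) * pderivJet (P x t) k v

/-- Euler-Lagrange operator for densities with explicit x,t dependence. -/
def EulerOpXT (P : ℝ → ℝ → (ℕ → ℝ) → ℝ) : ℝ → ℝ → (ℕ → ℝ) → ℝ :=
  fun x t v => ∑' k : ℕ, (-1 : ℝ) ^ k *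
    (totalDerXT^[k] (fun x' t' w => pderivJet (P x' t') k w)) x t v

/-- The jet of a function of one variable at a point. -/
def jetsAt (w : ℝ → ℝ) (x : ℝ) : ℕ → ℝ := fun k => iteratedDeriv k w x

def cCoef (c h : ℝ → ℝ) (u : ℝ) : ℝ := c u * iteratedDeriv 3 h u

def pCoef (c p h : ℝ → ℝ) (u : ℝ) : ℝ :=
  p u * iteratedDeriv 3 h u + (3/10) * (c u)^2 * iteratedDeriv 4 h u

def sCoef (c p s h : ℝ → ℝ) (u : ℝ) : ℝ :=
  s u * iteratedDeriv 3 h u - (1/8) * c u * iteratedDeriv 2 c u * iteratedDeriv 4 h u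
    - (1/8) * c u * deriv c u * iteratedDeriv 5 h u - (1/24) * (c u)^2 * iteratedDeriv 6 h u
    - (1/6) * deriv p u * iteratedDeriv 4 h u - (1/6) * p u * iteratedDeriv 5 h u

/-- Dubrovin's D-operator. -/
def Dop (c p s h : ℝ → ℝ) (ε : ℝ) (v : ℕ → ℝ) : ℝ :=
  h (v 0) - ε^2/2 * cCoef c h (v 0) * (v 1)^2
    + ε^4 * (pCoef c p h (v 0) * (v 2)^2 + sCoef c p s h (v 0) * (v 1)^4)

/-- Conservation defect of a t-dependent family of densities along (eveq). -/
def consDefect (c p s h : ℝ → ℝ) (S : ℝ → ℝ → ℝ → (ℕ → ℝ) → ℝ) (ε x t : ℝ) (v : ℕ → ℝ) : ℝ :=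
  deriv (fun τ => EulerOpXT (S ε) x τ v) t
    + EulerOpXT (fun x' t' w => EulerOpXT (S ε) x' t' w * totalDer (EulerOp (Dop c p s h ε)) w) x t v

/-- Conservation up to order `O(ε^K)` along (eveq). -/
def ConservedUpTo (c p s h : ℝ → ℝ) (S : ℝ → ℝ → ℝ → (ℕ → ℝ) → ℝ) (K : ℕ) : Prop :=
  ∀ x t : ℝ, ∀ v : ℕ → ℝ, ∀ j < K, iteratedDeriv j (fun ε => consDefect c p s h S ε x t v) 0 = 0

/-- The density of the string functional `S_f = S₀ - H^ε_f`, where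
`S₀ = ∫(x·D(r) + t·D(q) + ε⁴·e(u)·u_x³)dx` and `H^ε_f` is the truncation at order
`ε⁴` of `∫D_{(c,p,s)}(f + ε²f₁ + ε⁴f₂)dx`. -/
def SfFam (c p s r q e f f₁ f₂ : ℝ → ℝ) (ε x t : ℝ) (v : ℕ → ℝ) : ℝ :=
  x * Dop c p s r ε v + t * Dop c p s q ε v + ε^4 * e (v 0) * (v 1)^3
    - (Dop c p s f ε v + ε^2 * f₁ (v 0) - ε^4/2 * cCoef c f₁ (v 0) * (v 1)^2
        + ε^4 * f₂ (v 0))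

/-!
Smooth functions of `u`, the jet variables, `x` and `t` generate an algebra on which the partial
derivatives and the total derivative `D` are derivations. There `E(D P) = 0` is pure algebra: the
sum telescopes because `[∂/∂u^(k+1), D] = ∂/∂u^(k)`.

At order `ε²` the functionals `H_g = ∫ D_{(c,p,s)}(g) dx` and `H_h` are in involution: the
`ε²`-coefficient of `E(H_g) D(E(H_h))` is the total derivative of a flux `F(g, h) / 2`. The explicit
`x` in the string functional leaves over `E(F(r, h))`, and `c r' = 1`, `q' = h'' r'` make it cancel
against the explicit `t`-derivative, up to `E` of a total derivative.

At `t = 0`, put `m = c f'`, so that `m(φ(x)) = x`. Differentiating `c r' = 1` gives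
`c f''' = m c r''' - 2 r' c' m' + m''`, so in the `ε²`-coefficient the terms with a factor `x`
cancel, and what remains is `r' (c / m')'' / 2 - f₁'` at `φ(x)`.
-/

open Algebra Filter Topology
open scoped ContDiff

section DerivationAlong

variable {Ω : Type*} [AddCommGroup Ω] [Module ℝ Ω] {ξ : Ω → Ω}

/-- The algebra `B` of functions is stable under differentiation along the vector field `ξ`. -/
def StableAlong (ξ : Ω → Ω) (B : Subalgebra ℝ (Ω → ℝ)) : Prop :=
  ∀ P ∈ B, ∃ P' ∈ B, ∀ z, HasLineDerivAt ℝ P (P' z) z (ξ z)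

theorem stableAlong_adjoin_range {ι : Type*} {gen : ι → Ω → ℝ} {δ : ι → adjoin ℝ (range gen)}
    (hδ : ∀ i z, HasLineDerivAt ℝ (gen i) ((δ i).1 z) z (ξ z)) :
    StableAlong ξ (adjoin ℝ (range gen)) := fun P hP => by
  induction hP using adjoin_induction with
  | mem P hP =>
    obtain ⟨i, rfl⟩ := hP
    exact ⟨δ i, (δ i).2, hδ i⟩
  | algebraMap a => exact ⟨0, zero_mem _, fun _ => hasDerivAt_const _ _⟩
  | add P Q _ _ ihP ihQ =>
    obtain ⟨P', hP', hdP⟩ := ihP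
    obtain ⟨Q', hQ', hdQ⟩ := ihQ
    exact ⟨P' + Q', add_mem hP' hQ', fun z => (hdP z).add (hdQ z)⟩
  | mul P Q hP hQ ihP ihQ =>
    obtain ⟨P', hP', hdP⟩ := ihP
    obtain ⟨Q', hQ', hdQ⟩ := ihQ
    refine ⟨P' * Q + P * Q', add_mem (mul_mem hP' hQ) (mul_mem hP hQ'), fun z => ?_⟩
    simpa using! (hdP z).mul (hdQ z)

variable {B : Subalgebra ℝ (Ω → ℝ)}

theorem StableAlong.lineDifferentiableAt (hB : StableAlong ξ B) (P : B) (z : Ω) :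
    LineDifferentiableAt ℝ P.1 z (ξ z) := by
  obtain ⟨P', -, hP'⟩ := hB P P.2
  exact (hP' z).lineDifferentiableAt

theorem StableAlong.lineDeriv_mem (hB : StableAlong ξ B) (P : B) :
    (fun z => lineDeriv ℝ P.1 z (ξ z)) ∈ B := by
  obtain ⟨P', hP'B, hP'⟩ := hB P P.2
  rwa [funext fun z => (hP' z).lineDeriv]

/-- Differentiation along the vector field `ξ`, as a derivation of a stable algebra of functions. -/
def derivationAlong (hB : StableAlong ξ B) : Derivation ℝ B B :=
  Derivation.mk'
    { toFun := fun P => ⟨fun z => lineDeriv ℝ P.1 z (ξ z), hB.lineDeriv_mem P⟩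
      map_add' := fun P Q => Subtype.ext <| funext fun z =>
        deriv_fun_add (hB.lineDifferentiableAt P z) (hB.lineDifferentiableAt Q z)
      map_smul' := fun a P => Subtype.ext <| funext fun z =>
        deriv_const_mul a (hB.lineDifferentiableAt P z) }
    fun P Q => Subtype.ext <| funext fun z => by
      have h := deriv_fun_mul (hB.lineDifferentiableAt P z) (hB.lineDifferentiableAt Q z)
      simp only [zero_smul, add_zero] at h
      exact h.trans (by simp [lineDeriv, mul_comm, add_comm])

theorem derivationAlong_eq (hB : StableAlong ξ B) {P Q : B}
    (hPQ : ∀ z, HasLineDerivAt ℝ P.1 (Q.1 z) z (ξ z)) : derivationAlong hB P = Q :=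
  Subtype.ext <| funext fun z => (hPQ z).lineDeriv

end DerivationAlong

@[simp] theorem derivation_ofNat {R A : Type*} [CommRing R] [CommRing A] [Algebra R A]
    (δ : Derivation R A A) (n : ℕ) [n.AtLeastTwo] : δ ofNat(n) = 0 :=
  mod_cast δ.map_natCast n

/-- The algebra of smooth real functions of one variable. -/
def smoothFun : Subalgebra ℝ (ℝ → ℝ) where
  carrier := {g | ContDiff ℝ ∞ g}
  mul_mem' {f g} (hf : ContDiff ℝ ∞ f) (hg : ContDiff ℝ ∞ g) := hf.mul hg
  add_mem' {f g} (hf : ContDiff ℝ ∞ f) (hg : ContDiff ℝ ∞ g) := hf.add hg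
  algebraMap_mem' a := show ContDiff ℝ ∞ fun _ => a from contDiff_const

namespace smoothFun

@[simp] theorem coe_ofNat (n : ℕ) [n.AtLeastTwo] (y : ℝ) :
    (ofNat(n) : smoothFun).1 y = ofNat(n) := rfl

theorem contDiff (g : smoothFun) : ContDiff ℝ ∞ g.1 := g.2

theorem hasDerivAt (g : smoothFun) (y : ℝ) : HasDerivAt g.1 (deriv g.1 y) y :=
  ((contDiff g).differentiable (by simp) y).hasDerivAt

/-- Differentiation of smooth functions. -/
def der : Derivation ℝ smoothFun smoothFun :=
  Derivation.mk'
    { toFun := fun g => ⟨deriv g.1, (contDiff_infty_iff_deriv.1 (contDiff g)).2⟩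
      map_add' := fun f g => Subtype.ext <| funext fun y =>
        ((hasDerivAt f y).add (hasDerivAt g y)).deriv
      map_smul' := fun a g => Subtype.ext <| funext fun y => ((hasDerivAt g y).const_mul a).deriv }
    fun f g => Subtype.ext <| funext fun y =>
      ((hasDerivAt f y).mul (hasDerivAt g y)).deriv.trans (by simp [mul_comm, add_comm])

theorem hasDerivAt_der (g : smoothFun) (y : ℝ) : HasDerivAt g.1 ((der g).1 y) y := hasDerivAt g y

theorem coe_iterate_der (n : ℕ) (g : smoothFun) : (der^[n] g).1 = iteratedDeriv n g.1 := by
  induction n with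
  | zero => simp
  | succ n ih => rw [Function.iterate_succ_apply', iteratedDeriv_succ, ← ih]; rfl

end smoothFun

open smoothFun (der)

/-- The coordinates on the space of points `(x, t, u, u_x, u_xx, …)` from which differential
polynomials are built: `x`, `t`, the jet variables `u^(k)` and the smooth functions of `u`. -/
inductive JetGen
  | x
  | t
  | u (k : ℕ)
  | fn (g : smoothFun)

/-- The value of a coordinate at the point `(x, t, v)`, where `v k` is the value of `u^(k)`. -/
def JetGen.eval : JetGen → ℝ × ℝ × (ℕ → ℝ) → ℝ
  | x, z => z.1
  | t, z => z.2.1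
  | u k, z => z.2.2 k
  | fn g, z => g.1 (z.2.2 0)

/-- The algebra of differential polynomials in `u` whose coefficients are polynomials in `x`, `t`
and smooth functions of `u`. -/
abbrev diffPoly : Subalgebra ℝ (ℝ × ℝ × (ℕ → ℝ) → ℝ) := adjoin ℝ (range JetGen.eval)

namespace diffPoly

/-- A coordinate, as a differential polynomial. -/
def gen (i : JetGen) : diffPoly := ⟨i.eval, subset_adjoin ⟨i, rfl⟩⟩

/-- The independent variable `x`. -/
def X : diffPoly := gen .x

/-- The time `t`. -/
def T : diffPoly := gen .t

/-- The jet variable `u^(k)`. -/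
def U (k : ℕ) : diffPoly := gen (.u k)

/-- The differential polynomial `g(u)`. -/
def fn : smoothFun →ₐ[ℝ] diffPoly where
  toFun g := gen (.fn g)
  map_one' := rfl
  map_mul' _ _ := rfl
  map_zero' := rfl
  map_add' _ _ := rfl
  commutes' _ := rfl

/-- The density `(x, t, v) ↦ P(x, t, v)`. -/
def density (P : diffPoly) (x t : ℝ) (v : ℕ → ℝ) : ℝ := P.1 (x, t, v)

section density

variable (P Q : diffPoly) (x t : ℝ) (v : ℕ → ℝ)

@[simp] theorem density_X : density X x t v = x := rfl

@[simp] theorem density_T : density T x t v = t := rfl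

@[simp] theorem density_U (k : ℕ) : density (U k) x t v = v k := rfl

@[simp] theorem density_fn (g : smoothFun) : density (fn g) x t v = g.1 (v 0) := rfl

@[simp] theorem density_one : density 1 x t v = 1 := rfl

@[simp] theorem density_ofNat (n : ℕ) [n.AtLeastTwo] : density ofNat(n) x t v = ofNat(n) := rfl

@[simp] theorem density_zero : density 0 x t v = 0 := rfl

@[simp] theorem density_add : density (P + Q) x t v = density P x t v + density Q x t v := rfl

@[simp] theorem density_neg : density (-P) x t v = -density P x t v := rfl

@[simp] theorem density_sub : density (P - Q) x t v = density P x t v - density Q x t v := rfl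

@[simp] theorem density_mul : density (P * Q) x t v = density P x t v * density Q x t v := rfl

@[simp] theorem density_pow (n : ℕ) : density (P ^ n) x t v = density P x t v ^ n := rfl

@[simp] theorem density_smul (a : ℝ) : density (a • P) x t v = a * density P x t v := rfl

end density

@[ext] theorem ext_density {P Q : diffPoly} (h : ∀ x t v, density P x t v = density Q x t v) :
    P = Q :=
  Subtype.ext <| funext fun z => h z.1 z.2.1 z.2.2

@[elab_as_elim]
theorem induction_gen {p : diffPoly → Prop} (gen : ∀ i, p (gen i))
    (algebraMap : ∀ a, p (algebraMap ℝ diffPoly a))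
    (add : ∀ P Q, p P → p Q → p (P + Q)) (mul : ∀ P Q, p P → p Q → p (P * Q)) (P : diffPoly) :
    p P := by
  obtain ⟨P, hP⟩ := P
  induction hP using adjoin_induction with
  | mem P hP =>
    obtain ⟨i, rfl⟩ := hP
    exact gen i
  | algebraMap a => exact algebraMap a
  | add P Q hP hQ ihP ihQ => exact add ⟨P, hP⟩ ⟨Q, hQ⟩ ihP ihQ
  | mul P Q hP hQ ihP ihQ => exact mul ⟨P, hP⟩ ⟨Q, hQ⟩ ihP ihQ

theorem derivation_ext {δ₁ δ₂ : Derivation ℝ diffPoly diffPoly}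
    (h : ∀ i, δ₁ (gen i) = δ₂ (gen i)) : δ₁ = δ₂ :=
  Derivation.ext_of_adjoin_eq_top _ (adjoin_adjoin_coe_preimage (s := range JetGen.eval)) <| by
    rintro P ⟨i, hi⟩
    obtain rfl : gen i = P := Subtype.ext hi
    exact h i

section vectorField

variable (a b : diffPoly) (w : ℕ → diffPoly)

/-- The derivatives of the coordinates along the vector field `a ∂/∂x + b ∂/∂t + Σ w_k ∂/∂u^(k)`. -/
def genDeriv : JetGen → diffPoly
  | .x => a
  | .t => b
  | .u k => w k
  | .fn g => fn (der g) * w 0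

theorem hasLineDerivAt_gen (i : JetGen) (z : ℝ × ℝ × (ℕ → ℝ)) :
    HasLineDerivAt ℝ i.eval ((genDeriv a b w i).1 z) z (a.1 z, b.1 z, fun k => (w k).1 z) := by
  have hline (x y : ℝ) : HasDerivAt (fun s : ℝ => x + s • y) y 0 := by
    simpa using! ((hasDerivAt_id (0 : ℝ)).smul_const y).const_add x
  cases i with
  | x => exact hline z.1 (a.1 z)
  | t => exact hline z.2.1 (b.1 z)
  | u k => exact hline (z.2.2 k) ((w k).1 z)
  | fn g =>
    refine HasDerivAt.comp (h₂ := g.1) 0 ?_ (hline (z.2.2 0) ((w 0).1 z))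
    simpa only [zero_smul, add_zero] using! smoothFun.hasDerivAt g (z.2.2 0)

/-- The derivation `a ∂/∂x + b ∂/∂t + Σ w_k ∂/∂u^(k)` of the algebra of differential polynomials. -/
def vectorField : Derivation ℝ diffPoly diffPoly :=
  derivationAlong (stableAlong_adjoin_range (hasLineDerivAt_gen a b w))

theorem vectorField_gen (i : JetGen) : vectorField a b w (gen i) = genDeriv a b w i :=
  derivationAlong_eq _ (hasLineDerivAt_gen a b w i)

@[simp] theorem vectorField_X : vectorField a b w X = a := vectorField_gen a b w .x

@[simp] theorem vectorField_T : vectorField a b w T = b := vectorField_gen a b w .t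

@[simp] theorem vectorField_U (k : ℕ) : vectorField a b w (U k) = w k :=
  vectorField_gen a b w (.u k)

@[simp] theorem vectorField_fn (g : smoothFun) :
    vectorField a b w (fn g) = fn (der g) * w 0 := vectorField_gen a b w (.fn g)

end vectorField

/-- The partial derivative `∂/∂x` at fixed jet variables. -/
abbrev dx : Derivation ℝ diffPoly diffPoly := vectorField 1 0 0

/-- The partial derivative `∂/∂t`. -/
abbrev dt : Derivation ℝ diffPoly diffPoly := vectorField 0 1 0

/-- The partial derivative `∂/∂u^(k)`. -/
abbrev du (k : ℕ) : Derivation ℝ diffPoly diffPoly := vectorField 0 0 (Pi.single k 1)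

/-- The total `x`-derivative. -/
abbrev D : Derivation ℝ diffPoly diffPoly := vectorField 1 0 fun k => U (k + 1)

theorem density_dx (P : diffPoly) (x t : ℝ) (v : ℕ → ℝ) :
    density (dx P) x t v = deriv (fun y => density P y t v) x := by
  have h : density (dx P) x t v = deriv (fun s => density P (x + s) t v) 0 := by
    simp [density, vectorField, derivationAlong, lineDeriv, ← Pi.zero_def]
  simpa [h] using deriv_comp_const_add (f := fun y => density P y t v) x 0

theorem density_dt (P : diffPoly) (x t : ℝ) (v : ℕ → ℝ) :
    density (dt P) x t v = deriv (fun y => density P x y v) t := by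
  have h : density (dt P) x t v = deriv (fun s => density P x (t + s) v) 0 := by
    simp [density, vectorField, derivationAlong, lineDeriv, ← Pi.zero_def]
  simpa [h] using deriv_comp_const_add (f := fun y => density P x y v) t 0

theorem density_du (k : ℕ) (P : diffPoly) (x t : ℝ) (v : ℕ → ℝ) :
    density (du k P) x t v = pderivJet (density P x t) k v := by
  have hline (s : ℝ) : (v + s • fun j => (Pi.single k 1 : ℕ → diffPoly) j |>.1 (x, t, v)) =
      Function.update v k (v k + s) := by
    ext j
    obtain rfl | hj := eq_or_ne j k <;> simp [*]
  have h : density (du k P) x t v =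
      deriv (fun s => density P x t (Function.update v k (v k + s))) 0 := by
    simp [density, vectorField, derivationAlong, lineDeriv, hline]
  simpa [h, pderivJet] using
    deriv_comp_const_add (f := fun y => density P x t (Function.update v k y)) (v k) 0

theorem eventually_du_eq_zero (P : diffPoly) : ∀ᶠ k in atTop, du k P = 0 := by
  induction P using induction_gen with
  | gen i =>
    filter_upwards [eventually_gt_atTop (match i with | .u j => j | _ => 0)] with k hk
    rw [vectorField_gen]
    cases i <;> simp_all [genDeriv, hk.ne]
  | algebraMap a => exact .of_forall fun k => (du k).map_algebraMap a
  | add P Q ihP ihQ => filter_upwards [ihP, ihQ] with k hkP hkQ using by simp [hkP, hkQ]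
  | mul P Q ihP ihQ => filter_upwards [ihP, ihQ] with k hkP hkQ using by simp [hkP, hkQ]

theorem hasSum_density_du (P : diffPoly) (x t : ℝ) (v : ℕ → ℝ) :
    HasSum (fun k => v (k + 1) * density (du k P) x t v) (density (D P - dx P) x t v) := by
  induction P using induction_gen with
  | gen i =>
    simp only [vectorField_gen]
    cases i with
    | x => simp [genDeriv, hasSum_zero]
    | t => simp [genDeriv, hasSum_zero]
    | u j =>
      convert hasSum_single j fun k hk => ?_ using 1
      · simp [genDeriv]
      · simp [genDeriv, hk.symm]
    | fn g =>
      convert hasSum_single 0 fun k hk => ?_ using 1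
      · simp [genDeriv, mul_comm]
      · simp [genDeriv, hk.symm]
  | algebraMap a => simp [hasSum_zero]
  | add P Q ihP ihQ =>
    convert ihP.add ihQ using 1
    · ext k
      simp [mul_add]
    · simp [add_sub_add_comm]
  | mul P Q ihP ihQ =>
    convert! (ihQ.mul_left (density P x t v)).add (ihP.mul_left (density Q x t v)) using 1
    · ext k
      simp only [Derivation.leibniz, smul_eq_mul, density_add, density_mul]
      ring
    · simp only [Derivation.leibniz, smul_eq_mul, density_sub, density_add, density_mul]
      ring

theorem totalDerXT_density (P : diffPoly) : totalDerXT (density P) = density (D P) := by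
  ext x t v
  simp only [totalDerXT, ← density_dx, ← density_du, (hasSum_density_du P x t v).tsum_eq,
    density_sub, add_sub_cancel]

theorem commutator_du_zero_D : ⁅du 0, D⁆ = 0 := derivation_ext fun i => by
  simp only [Derivation.commutator_apply, vectorField_gen]
  cases i <;> simp [genDeriv, mul_comm, Pi.single_apply, apply_ite D]

theorem commutator_du_succ_D (k : ℕ) : ⁅du (k + 1), D⁆ = du k := derivation_ext fun i => by
  simp only [Derivation.commutator_apply, vectorField_gen]
  cases i <;> simp [genDeriv, Pi.single_apply, apply_ite D, eq_comm (b := k)]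

/-- The `k`-th term of the Euler–Lagrange operator, `(-D)^k ∘ ∂/∂u^(k)`. -/
def eulerTerm (k : ℕ) : diffPoly →ₗ[ℝ] diffPoly :=
  ((-(D : diffPoly →ₗ[ℝ] diffPoly)) ^ k) ∘ₗ (du k : diffPoly →ₗ[ℝ] diffPoly)

theorem finite_support_eulerTerm (P : diffPoly) : (fun k => eulerTerm k P).HasFiniteSupport := by
  obtain ⟨n, hn⟩ := eventually_atTop.1 (eventually_du_eq_zero P)
  refine (finite_lt_nat n).subset fun k hk => ?_
  by_contra hkn
  simp_all [eulerTerm]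

/-- The Euler–Lagrange operator `E(P) = Σ (-D)^k (∂P/∂u^(k))`. -/
def euler : diffPoly →ₗ[ℝ] diffPoly where
  toFun P := ∑ᶠ k, eulerTerm k P
  map_add' P Q := by
    simp only [map_add]
    exact finsum_add_distrib (finite_support_eulerTerm P) (finite_support_eulerTerm Q)
  map_smul' a P := by simp [smul_finsum]

theorem euler_eq_sum_range {P : diffPoly} {n : ℕ} (hP : ∀ k ≥ n, du k P = 0) :
    euler P = ∑ k ∈ Finset.range n, eulerTerm k P :=
  finsum_eq_finsetSum_of_support_subset _ fun k hk => by
    by_contra hkn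
    simp_all [eulerTerm]

theorem exists_euler_eq_sum_range (P : diffPoly) :
    ∃ n, (∀ k ≥ n, du k P = 0) ∧ euler P = ∑ k ∈ Finset.range n, eulerTerm k P := by
  obtain ⟨n, hn⟩ := eventually_atTop.1 (eventually_du_eq_zero P)
  exact ⟨n, hn, euler_eq_sum_range hn⟩

theorem euler_eq_of_order_le_one {P : diffPoly} (hP : ∀ k, du (k + 2) P = 0) :
    euler P = du 0 P - D (du 1 P) := by
  have hP' : ∀ k ≥ 2, du k P = 0 := fun k hk => Nat.sub_add_cancel hk ▸ hP (k - 2)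
  simp [euler_eq_sum_range hP', Finset.sum_range_succ, eulerTerm, sub_eq_add_neg]

theorem EulerOpXT_density (P : diffPoly) : EulerOpXT (density P) = density (euler P) := by
  have hdu (k : ℕ) : (fun x t v => pderivJet (density P x t) k v) = density (du k P) := by
    ext x t v
    exact (density_du k P x t v).symm
  have hiter (k : ℕ) (Q : diffPoly) : totalDerXT^[k] (density Q) = density (D^[k] Q) := by
    induction k generalizing Q with
    | zero => rfl
    | succ k ih => simp [totalDerXT_density, ih]
  have hterm (k : ℕ) (x t v) : (-1 : ℝ) ^ k * density (D^[k] (du k P)) x t v =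
      density (eulerTerm k P) x t v := by
    rw [eulerTerm, ← neg_one_smul ℝ (D : diffPoly →ₗ[ℝ] diffPoly), smul_pow, LinearMap.comp_apply,
      LinearMap.smul_apply, Module.End.pow_apply]
    rfl
  obtain ⟨n, hn, hsum⟩ := exists_euler_eq_sum_range P
  ext x t v
  simp only [EulerOpXT, hdu, hiter, hterm]
  rw [hsum, tsum_eq_sum (s := Finset.range n) fun k hk => ?_]
  · simp [density]
  · simp [eulerTerm, hn k (by simpa using hk)]

theorem totalDerXT_jet (P : (ℕ → ℝ) → ℝ) : totalDerXT (fun _ _ => P) = fun _ _ => totalDer P := by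
  ext x t v
  simp [totalDerXT, totalDer]

theorem EulerOpXT_jet (P : (ℕ → ℝ) → ℝ) : EulerOpXT (fun _ _ => P) = fun _ _ => EulerOp P := by
  have hiter (k : ℕ) (Q : (ℕ → ℝ) → ℝ) :
      totalDerXT^[k] (fun _ _ => Q) = fun _ _ => totalDer^[k] Q := by
    induction k generalizing Q with
    | zero => rfl
    | succ k ih => simp [totalDerXT_jet, ih]
  ext x t v
  simp only [EulerOpXT, EulerOp]
  exact tsum_congr fun k => congrArg _ <| congrFun₃ (hiter k (pderivJet P k)) x t v

theorem euler_D (P : diffPoly) : euler (D P) = 0 := by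
  obtain ⟨n, hn, -⟩ := exists_euler_eq_sum_range P
  have hzero : du 0 (D P) = D (du 0 P) :=
    sub_eq_zero.1 <| by rw [← Derivation.commutator_apply, commutator_du_zero_D]; rfl
  have hsucc (k : ℕ) : du (k + 1) (D P) = D (du (k + 1) P) + du k P :=
    sub_eq_iff_eq_add'.1 <| by rw [← Derivation.commutator_apply, commutator_du_succ_D]
  let a (k : ℕ) : diffPoly := ((-(D : diffPoly →ₗ[ℝ] diffPoly)) ^ k) (D (du k P))
  have hterm (k : ℕ) : eulerTerm (k + 1) (D P) = a (k + 1) - a k := by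
    simp [eulerTerm, hsucc, a, pow_succ, sub_eq_add_neg, add_comm]
  have hn' (k : ℕ) (hk : n + 1 ≤ k) : du k (D P) = 0 := by
    obtain ⟨k, rfl⟩ := Nat.exists_eq_add_of_le' (Nat.one_le_of_lt hk)
    simp [hsucc, hn k (by lia), hn (k + 1) (by lia)]
  rw [euler_eq_sum_range hn', Finset.sum_range_succ', Finset.sum_congr rfl fun k _ => hterm k,
    Finset.sum_range_sub]
  simp [eulerTerm, hzero, a, hn]

theorem euler_X_mul_D (P : diffPoly) : euler (X * D P) = -euler P := by
  have h : D (X * P) = X * D P + P := by simp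
  rw [eq_sub_of_add_eq h.symm, map_sub, euler_D, zero_sub]

theorem euler_T_mul (P : diffPoly) : euler (T * P) = T * euler P := by
  obtain ⟨n, hn, hsum⟩ := exists_euler_eq_sum_range P
  have hterm (k : ℕ) : eulerTerm k (T * P) = T * eulerTerm k P := by
    have hpow (Q : diffPoly) : ((-(D : diffPoly →ₗ[ℝ] diffPoly)) ^ k) (T * Q) =
        T * ((-(D : diffPoly →ₗ[ℝ] diffPoly)) ^ k) Q := by
      induction k with
      | zero => rfl
      | succ k ih =>
        simp only [pow_succ', Module.End.mul_apply, ih, LinearMap.neg_apply, Derivation.coeFn_coe,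
          Derivation.leibniz, smul_eq_mul, vectorField_T]
        ring
    simp [eulerTerm, hpow]
  rw [hsum, euler_eq_sum_range (P := T * P) (n := n), Finset.mul_sum]
  · exact Finset.sum_congr rfl fun k _ => hterm k
  · exact fun k hk => by simp [hn k hk]

theorem euler_fn (a : smoothFun) : euler (fn a) = fn (der a) := by
  rw [euler_eq_of_order_le_one] <;> simp

theorem euler_X_mul_fn (a : smoothFun) : euler (X * fn a) = X * fn (der a) := by
  rw [euler_eq_of_order_le_one] <;> simp

theorem euler_fn_mul_U_one (a : smoothFun) : euler (fn a * U 1) = 0 := by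
  rw [euler_eq_of_order_le_one] <;> simp [mul_comm]

/-- The density `a(u) u_x²`. -/
def quad (a : smoothFun) : diffPoly := fn a * U 1 ^ 2

@[simp] theorem density_quad (a : smoothFun) (x t : ℝ) (v : ℕ → ℝ) :
    density (quad a) x t v = a.1 (v 0) * v 1 ^ 2 := rfl

/-- Minus the variational derivative of `a(u) u_x²`. -/
def quadVar (a : smoothFun) : diffPoly := fn (der a) * U 1 ^ 2 + 2 * fn a * U 2

theorem du_zero_quad (a : smoothFun) : du 0 (quad a) = fn (der a) * U 1 ^ 2 := by
  simp [quad, mul_comm]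

theorem du_one_quad (a : smoothFun) : du 1 (quad a) = 2 * fn a * U 1 := by
  simp [quad, mul_left_comm, mul_assoc]

theorem du_add_two_quad (a : smoothFun) (k : ℕ) : du (k + 2) (quad a) = 0 := by
  simp [quad]

theorem euler_quad (a : smoothFun) : euler (quad a) = -quadVar a := by
  rw [euler_eq_of_order_le_one (du_add_two_quad a), du_zero_quad, du_one_quad, quadVar]
  simp only [Derivation.leibniz, vectorField_U, vectorField_fn, derivation_ofNat, smul_eq_mul]
  ring

theorem euler_X_mul_quad (a : smoothFun) :
    euler (X * quad a) = -(X * quadVar a + 2 * fn a * U 1) := by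
  rw [euler_eq_of_order_le_one fun k => by simp [du_add_two_quad], quadVar]
  simp only [Derivation.leibniz, map_add, vectorField_X, vectorField_U, vectorField_fn,
    du_zero_quad, du_one_quad, derivation_ofNat, smul_eq_mul, map_zero]
  ring

end diffPoly

namespace smoothFun

theorem contDiff_iteratedDeriv (n : ℕ) (g : smoothFun) : ContDiff ℝ ∞ (iteratedDeriv n g.1) :=
  coe_iterate_der n g ▸ (der^[n] g).2

theorem coe_mul_iterate_der (c h : smoothFun) : (c * der^[3] h).1 = cCoef c.1 h.1 := by
  ext y
  simp [cCoef, -Function.iterate_succ, coe_iterate_der]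

theorem pCoef_mem (c p h : smoothFun) : pCoef c.1 p.1 h.1 ∈ smoothFun := by
  have hh (n : ℕ) := contDiff_iteratedDeriv n h
  exact ((contDiff p).mul (hh 3)).add ((contDiff_const.mul ((contDiff c).pow 2)).mul (hh 4))

theorem sCoef_mem (c p s h : smoothFun) : sCoef c.1 p.1 s.1 h.1 ∈ smoothFun := by
  have hh (n : ℕ) := contDiff_iteratedDeriv n h
  have hc := contDiff c
  have hp := contDiff p
  have hs := contDiff s
  have hddc := contDiff_iteratedDeriv 2 c
  change ContDiff ℝ ∞ fun u => sCoef c.1 p.1 s.1 h.1 u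
  unfold sCoef
  fun_prop (disch := assumption)

end smoothFun

namespace diffPoly

/-- The `ε⁴`-coefficient of the `D`-operator. -/
def quartic (c p s h : smoothFun) : diffPoly :=
  fn ⟨_, smoothFun.pCoef_mem c p h⟩ * U 2 ^ 2 + fn ⟨_, smoothFun.sCoef_mem c p s h⟩ * U 1 ^ 4

theorem Dop_eq_density (c p s h : smoothFun) (ε : ℝ) :
    (fun _ _ => Dop c.1 p.1 s.1 h.1 ε) = density (fn h +
      ε ^ 2 • ((-1 / 2 : ℝ) • quad (c * der^[3] h)) + ε ^ 4 • quartic c p s h) := by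
  ext x t v
  simp only [Dop, quartic, density_add, density_fn, density_smul, density_quad, density_mul,
    density_pow, density_U, smoothFun.coe_mul_iterate_der]
  ring

/-- The conservation defect `∂_t E(A) + E(E(A) · D E(H))` of the functional with density `A` along
the Hamiltonian flow of the functional with density `H`. -/
def defect (A H : diffPoly) : diffPoly := dt (euler A) + euler (euler A * D (euler H))

theorem consDefect_eq_density {c p s h : ℝ → ℝ} {S : ℝ → ℝ → ℝ → (ℕ → ℝ) → ℝ} {ε : ℝ}
    {A H : diffPoly} (hS : S ε = density A) (hH : (fun _ _ => Dop c p s h ε) = density H) :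
    consDefect c p s h S ε = density (defect A H) := by
  have hflow : (fun _ _ => totalDer (EulerOp (Dop c p s h ε))) = density (D (euler H)) := by
    rw [← totalDerXT_jet, ← EulerOpXT_jet, hH, EulerOpXT_density, totalDerXT_density]
  have hprod : (fun x t w => density (euler A) x t w * totalDer (EulerOp (Dop c p s h ε)) w) =
      density (euler A * D (euler H)) := by
    ext x t w
    rw [density_mul, ← hflow]
  ext x t v
  rw [consDefect, hS, EulerOpXT_density, hprod, EulerOpXT_density, defect, density_add, density_dt]

theorem iteratedDeriv_pow_mul_eq_zero {n j : ℕ} (hj : j < n) {g : ℝ → ℝ} (hg : ContDiff ℝ ∞ g) :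
    iteratedDeriv j (fun ε => ε ^ n * g ε) 0 = 0 := by
  rw [iteratedDeriv_fun_mul (by fun_prop) (hg.contDiffAt.of_le (by exact_mod_cast le_top))]
  refine Finset.sum_eq_zero fun i hi => ?_
  rw [iteratedDeriv_fun_pow_zero, if_neg (by grind)]
  simp

theorem conservedUpTo_four {c p s h : ℝ → ℝ} {S : ℝ → ℝ → ℝ → (ℕ → ℝ) → ℝ}
    {S₀ S₂ S₄ H₀ H₂ H₄ : diffPoly}
    (hS : ∀ ε, S ε = density (S₀ + ε ^ 2 • S₂ + ε ^ 4 • S₄))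
    (hH : ∀ ε, (fun _ _ => Dop c p s h ε) = density (H₀ + ε ^ 2 • H₂ + ε ^ 4 • H₄))
    (h₀ : defect S₀ H₀ = 0) (h₂ : defect S₂ H₀ + euler (euler S₀ * D (euler H₂)) = 0) :
    ConservedUpTo c p s h S 4 := by
  intro x t v j hj
  let R₄ := defect S₄ H₀ + euler (euler S₂ * D (euler H₂)) + euler (euler S₀ * D (euler H₄))
  let R₆ := euler (euler S₄ * D (euler H₂)) + euler (euler S₂ * D (euler H₄))
  let R₈ := euler (euler S₄ * D (euler H₄))
  have hdefect (ε : ℝ) : defect (S₀ + ε ^ 2 • S₂ + ε ^ 4 • S₄) (H₀ + ε ^ 2 • H₂ + ε ^ 4 • H₄) =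
      defect S₀ H₀ + ε ^ 2 • (defect S₂ H₀ + euler (euler S₀ * D (euler H₂))) +
        ε ^ 4 • (R₄ + ε ^ 2 • R₆ + ε ^ 4 • R₈) := by
    simp only [defect, R₄, R₆, R₈, map_add, map_smul, Derivation.map_smul, add_mul, mul_add,
      smul_mul_assoc, mul_smul_comm]
    module
  have hexpand (ε : ℝ) : consDefect c p s h S ε x t v = ε ^ 4 *
      (density R₄ x t v + ε ^ 2 * density R₆ x t v + ε ^ 4 * density R₈ x t v) := by
    rw [consDefect_eq_density (hS ε) (hH ε), hdefect, h₀, h₂, smul_zero, add_zero, zero_add]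
    simp only [density_add, density_smul]
  simp only [hexpand]
  exact iteratedDeriv_pow_mul_eq_zero hj (by fun_prop)

/-- The `ε⁰`-coefficient of the density of the string functional. -/
def stringZero (r q f : smoothFun) : diffPoly := X * fn r + T * fn q - fn f

/-- The `ε²`-coefficient of the density of the string functional. -/
def stringTwo (c r q f f₁ : smoothFun) : diffPoly :=
  (-1 / 2 : ℝ) • (X * quad (c * der^[3] r) + T * quad (c * der^[3] q) - quad (c * der^[3] f)) -
    fn f₁

theorem SfFam_eq_density (c p s r q e f f₁ f₂ : smoothFun) (ε : ℝ) :
    SfFam c.1 p.1 s.1 r.1 q.1 e.1 f.1 f₁.1 f₂.1 ε =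
      density (stringZero r q f + ε ^ 2 • stringTwo c r q f f₁ +
        ε ^ 4 • (X * quartic c p s r + T * quartic c p s q + fn e * U 1 ^ 3 -
          (quartic c p s f - (1 / 2 : ℝ) • quad (c * der^[3] f₁) + fn f₂))) := by
  ext x t v
  simp only [SfFam, Dop, stringZero, stringTwo, quartic, density_add, density_sub, density_mul,
    density_X, density_T, density_fn, density_U, density_smul, density_quad, density_pow,
    smoothFun.coe_mul_iterate_der]
  ring

theorem euler_stringZero (r q f : smoothFun) :
    euler (stringZero r q f) = X * fn (der r) + T * fn (der q) - fn (der f) := by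
  simp [stringZero, euler_X_mul_fn, euler_T_mul, euler_fn]

theorem euler_stringTwo (c r q f f₁ : smoothFun) :
    euler (stringTwo c r q f f₁) =
      (1 / 2 : ℝ) • (X * quadVar (c * der^[3] r) + 2 * fn (c * der^[3] r) * U 1 +
        T * quadVar (c * der^[3] q) - quadVar (c * der^[3] f)) - fn (der f₁) := by
  rw [stringTwo, map_sub, map_smul, map_sub, map_add, euler_X_mul_quad, euler_T_mul, euler_quad,
    euler_quad, euler_fn, neg_div, neg_smul, ← smul_neg]
  congr 2
  ring

/-- The flux by which `g ↦ E(D(g))` and `h ↦ E(D(h))` commute at order `ε²`. -/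
def flux (c g h : smoothFun) : diffPoly :=
  fn (der g) * quadVar (c * der^[3] h) +
    quad (c * (der^[2] h * der^[3] g - der^[2] g * der^[3] h))

theorem D_flux (c g h : smoothFun) :
    D (flux c g h) = fn (der g) * D (quadVar (c * der^[3] h)) +
      quadVar (c * der^[3] g) * D (fn (der h)) := by
  simp only [flux, quadVar, quad, Function.iterate_succ, Function.iterate_zero, Function.comp_apply,
    id_eq, Derivation.leibniz, Derivation.leibniz_pow, smul_eq_mul, nsmul_eq_mul, map_add, map_sub,
    map_mul, derivation_ofNat, vectorField_fn, vectorField_U]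
  ring

theorem flux_eq {c h r q : smoothFun} (hcr : c * der r = 1) (hq : der q = der^[2] h * der r) :
    flux c r h = 2 * quad (c * (der^[3] r * der^[2] h)) - quad (c * der^[3] q) +
      D (2 * fn (der^[3] h) * U 1) := by
  have hcr₁ : fn c * fn (der r) = 1 := by rw [← map_mul, hcr, map_one]
  have hcr₂ : fn (der c) * fn (der r) + fn c * fn (der (der r)) = 0 := by
    simpa [mul_comm, add_comm] using congrArg (fn <| der ·) hcr
  have hq₃ : der^[3] q = der^[2] (der^[2] h * der r) := by rw [← hq]; rfl
  simp only [hq₃, flux, quad, quadVar, Function.iterate_succ, Function.iterate_zero,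
    Function.comp_apply, id_eq, Derivation.leibniz, smul_eq_mul, map_mul, map_add, map_sub,
    derivation_ofNat, vectorField_fn, vectorField_U]
  linear_combination (2 * fn (der (der (der (der h)))) * U 1 ^ 2 +
    2 * fn (der (der (der h))) * U 2) * hcr₁ + fn (der (der (der h))) * U 1 ^ 2 * hcr₂

theorem defect_stringZero {h r q f : smoothFun} (hq : der q = der^[2] h * der r) :
    defect (stringZero r q f) (fn h) = 0 := by
  have hprod : euler (stringZero r q f) * D (euler (fn h)) =
      X * D (fn q) + T * (fn (der q * der^[2] h) * U 1) - fn (der f * der^[2] h) * U 1 := by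
    simp only [euler_stringZero, euler_fn, hq, Function.iterate_succ, Function.iterate_zero,
      Function.comp_apply, id_eq, map_mul, vectorField_fn]
    ring
  have heuler : euler (euler (stringZero r q f) * D (euler (fn h))) = -fn (der q) := by
    rw [hprod, map_sub, map_add, euler_X_mul_D, euler_T_mul, euler_fn_mul_U_one,
      euler_fn_mul_U_one, euler_fn, mul_zero, add_zero, sub_zero]
  rw [defect, heuler, euler_stringZero]
  simp

theorem defect_stringTwo {c h r q f f₁ : smoothFun} (hcr : c * der r = 1)
    (hq : der q = der^[2] h * der r) :
    defect (stringTwo c r q f f₁) (fn h) +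
      euler (euler (stringZero r q f) * D (euler ((-1 / 2 : ℝ) • quad (c * der^[3] h)))) = 0 := by
  let W := 2 * quad (c * (der^[3] r * der^[2] h))
  have hprod : euler (stringTwo c r q f f₁) * D (euler (fn h)) +
        euler (stringZero r q f) * D (euler ((-1 / 2 : ℝ) • quad (c * der^[3] h))) =
      (1 / 2 : ℝ) • (X * D (flux c r h) + T * D (flux c q h) - D (flux c f h) + W) -
        fn (der f₁ * der^[2] h) * U 1 := by
    rw [D_flux, D_flux, D_flux, euler_stringTwo, euler_stringZero, euler_fn, map_smul, euler_quad]
    ext x t v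
    simp only [W, Function.iterate_succ, Function.iterate_zero, Function.comp_apply, id_eq, map_mul,
      map_neg, Derivation.map_smul, vectorField_fn, density_add, density_sub, density_mul,
      density_neg, density_smul, density_X, density_T, density_fn, density_U, density_ofNat,
      density_quad, MulMemClass.coe_mul, Pi.mul_apply]
    ring
  have hflux : euler (flux c r h) = euler W - euler (quad (c * der^[3] q)) := by
    rw [flux_eq hcr hq, map_add, map_sub, euler_D, add_zero]
  have hdt : dt (euler (stringTwo c r q f f₁)) = (1 / 2 : ℝ) • quadVar (c * der^[3] q) := by
    simp [euler_stringTwo, quadVar]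
  rw [defect, add_assoc, ← map_add, hprod, hdt, map_sub, map_smul, map_add, map_sub, map_add,
    euler_X_mul_D, euler_T_mul, euler_D, euler_D, euler_fn_mul_U_one, hflux, euler_quad,
    mul_zero]
  module

theorem conservedUpTo_SfFam {c p s h r q : smoothFun} (e f f₁ f₂ : smoothFun) (hcr : c * der r = 1)
    (hq : der q = der^[2] h * der r) :
    ConservedUpTo c.1 p.1 s.1 h.1 (SfFam c.1 p.1 s.1 r.1 q.1 e.1 f.1 f₁.1 f₂.1) 4 :=
  conservedUpTo_four (SfFam_eq_density c p s r q e f f₁ f₂) (Dop_eq_density c p s h)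
    (defect_stringZero hq) (defect_stringTwo hcr hq)

end diffPoly

namespace smoothFun

theorem iteratedDeriv_two_div (a b : smoothFun) {y : ℝ} (hb : b.1 y ≠ 0) :
    iteratedDeriv 2 (fun z => a.1 z / b.1 z) y =
      (der^[2] a).1 y * (b.1 y)⁻¹ - 2 * (der a).1 y * (der b).1 y * (b.1 y)⁻¹ ^ 2 -
        a.1 y * (der^[2] b).1 y * (b.1 y)⁻¹ ^ 2 + 2 * a.1 y * (der b).1 y ^ 2 * (b.1 y)⁻¹ ^ 3 := by
  have hdiv : deriv (fun z => a.1 z / b.1 z) =ᶠ[𝓝 y]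
      fun z => ((der a).1 z * b.1 z - a.1 z * (der b).1 z) / b.1 z ^ 2 := by
    filter_upwards [(contDiff b).continuous.continuousAt.eventually_ne hb] with z hz
    exact ((hasDerivAt_der a z).fun_div (hasDerivAt_der b z) hz).deriv
  have hnum := (hasDerivAt_der (der a * b - a * der b) y).fun_div (hasDerivAt_der (b ^ 2) y)
    (pow_ne_zero 2 hb)
  rw [iteratedDeriv_succ, iteratedDeriv_one, hdiv.deriv_eq]
  refine hnum.deriv.trans ?_
  simp only [pow_two, map_sub, Derivation.leibniz, smul_eq_mul, AddSubgroupClass.coe_sub,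
    AddMemClass.coe_add, MulMemClass.coe_mul, Pi.sub_apply, Pi.add_apply, Pi.mul_apply,
    Function.iterate_succ, Function.iterate_zero, Function.comp_apply, id_eq]
  field_simp
  ring

theorem deriv_section {m φ : smoothFun} {x : ℝ} (hφ : ∀ᶠ y in 𝓝 x, m.1 (φ.1 y) = y) :
    (der m).1 (φ.1 x) * (der φ).1 x = 1 ∧
      (der^[2] φ).1 x = -(der^[2] m).1 (φ.1 x) * (der φ).1 x ^ 3 := by
  have hfirst : ∀ᶠ y in 𝓝 x, (der m).1 (φ.1 y) * (der φ).1 y = 1 := by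
    filter_upwards [hφ.eventually_nhds] with y hy
    exact ((hasDerivAt_der m _).comp y (hasDerivAt_der φ y)).unique
      ((hasDerivAt_id y).congr_of_eventuallyEq hy)
  have hsecond := (((hasDerivAt_der (der m) _).comp x (hasDerivAt_der φ x)).fun_mul
    (hasDerivAt_der (der φ) x)).unique ((hasDerivAt_const x 1).congr_of_eventuallyEq hfirst)
  refine ⟨hfirst.self_of_nhds, ?_⟩
  simp only [Function.iterate_succ, Function.iterate_zero, Function.comp_apply, id_eq] at hsecond ⊢
  linear_combination (der φ).1 x * hsecond - (der (der φ)).1 x * hfirst.self_of_nhds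

theorem mul_der_three_of_mul_der_eq_one {c r : smoothFun} (hcr : c * der r = 1) :
    c * der^[3] r = der^[2] c * der r - 2 * der (der r * der c) := by
  have hcr₂ : der^[2] (c * der r) = 0 := by simp [hcr]
  simp only [Function.iterate_succ, Function.iterate_zero, Function.comp_apply, id_eq,
    Derivation.leibniz, map_add, smul_eq_mul] at hcr₂ ⊢
  linear_combination hcr₂

theorem mul_der_three_eq {c r f m : smoothFun} (hcr : c * der r = 1) (hm : c * der f = m) :
    c * der^[3] f = m * (c * der^[3] r) - 2 * (der r * der c * der m) + der^[2] m := by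
  have hcr₁ : c * der (der r) + der r * der c = 0 := by simpa using congrArg der hcr
  have hf : der f = der r * m := by linear_combination (-der f) * hcr + der r * hm
  simp only [Function.iterate_succ, Function.iterate_zero, Function.comp_apply, id_eq, hf,
    Derivation.leibniz, map_add, smul_eq_mul]
  linear_combination der (der m) * hcr + 2 * der m * hcr₁

end smoothFun

namespace diffPoly

theorem density_euler_stringZero_eq_zero {c r q f m φ : smoothFun} (hcr : c * der r = 1)
    (hm : c * der f = m) {x : ℝ} (hx : m.1 (φ.1 x) = x) :
    density (euler (stringZero r q f)) x 0 (jetsAt φ.1 x) = 0 := by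
  have hf : der f = der r * m := by linear_combination (-der f) * hcr + der r * hm
  simp [euler_stringZero, jetsAt, hf, hx, mul_comm]

theorem density_jetsAt_quadVar (a : smoothFun) {m φ : smoothFun} {x : ℝ}
    (hφ : ∀ᶠ y in 𝓝 x, m.1 (φ.1 y) = y) (t : ℝ) :
    density (quadVar a) x t (jetsAt φ.1 x) = (der a).1 (φ.1 x) * (der φ).1 x ^ 2 -
      2 * a.1 (φ.1 x) * (der^[2] m).1 (φ.1 x) * (der φ).1 x ^ 3 := by
  simp only [quadVar, density_add, density_mul, density_pow, density_fn, density_U, density_ofNat,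
    jetsAt, ← smoothFun.coe_iterate_der, (smoothFun.deriv_section hφ).2]
  simp only [Function.iterate_zero, Function.iterate_one, id_eq]
  ring

theorem density_jetsAt_quadVar_mul_der_three {c r f m φ : smoothFun} (hcr : c * der r = 1)
    (hm : c * der f = m) {x : ℝ} (hφ : ∀ᶠ y in 𝓝 x, m.1 (φ.1 y) = y) (t : ℝ) :
    density (quadVar (c * der^[3] f)) x t (jetsAt φ.1 x) =
      x * density (quadVar (c * der^[3] r)) x t (jetsAt φ.1 x) +
        ((c * der^[3] r).1 (φ.1 x) * (der φ).1 x -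
          2 * (der (der r * der c)).1 (φ.1 x) * (der φ).1 x +
          2 * (der r * der c).1 (φ.1 x) * (der^[2] m).1 (φ.1 x) * (der φ).1 x ^ 2 +
          (der^[3] m).1 (φ.1 x) * (der φ).1 x ^ 2 -
          2 * (der^[2] m).1 (φ.1 x) ^ 2 * (der φ).1 x ^ 3) := by
  have hx : m.1 (φ.1 x) = x := hφ.self_of_nhds
  have hn := (smoothFun.deriv_section hφ).1
  rw [smoothFun.mul_der_three_eq hcr hm, density_jetsAt_quadVar _ hφ, density_jetsAt_quadVar _ hφ]
  generalize c * der^[3] r = a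
  generalize der r * der c = k
  simp only [map_add, map_sub, Derivation.leibniz, smul_eq_mul, Function.iterate_succ,
    Function.iterate_zero, Function.comp_apply, id_eq, derivation_ofNat, mul_zero, add_zero,
    AddMemClass.coe_add, AddSubgroupClass.coe_sub, MulMemClass.coe_mul, Pi.add_apply, Pi.sub_apply,
    Pi.mul_apply, smoothFun.coe_ofNat]
  linear_combination
    ((der a).1 (φ.1 x) * (der φ).1 x ^ 2 -
      2 * a.1 (φ.1 x) * (der (der m)).1 (φ.1 x) * (der φ).1 x ^ 3) * hx +
    (a.1 (φ.1 x) * (der φ).1 x - 2 * (der k).1 (φ.1 x) * (der φ).1 x +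
      4 * k.1 (φ.1 x) * (der (der m)).1 (φ.1 x) * (der φ).1 x ^ 2) * hn

theorem density_euler_stringTwo_eq_zero {c r q f f₁ m φ : smoothFun} (hcr : c * der r = 1)
    (hm : c * der f = m) {x : ℝ} (hφ : ∀ᶠ y in 𝓝 x, m.1 (φ.1 y) = y)
    (hf₁ : (der f₁).1 (φ.1 x) = 1 / 2 * (der r).1 (φ.1 x) *
      iteratedDeriv 2 (fun z => c.1 z / (der m).1 z) (φ.1 x)) :
    density (euler (stringTwo c r q f f₁)) x 0 (jetsAt φ.1 x) = 0 := by
  have hn := (smoothFun.deriv_section hφ).1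
  have hcr₀ : (c * der r).1 (φ.1 x) = 1 := by rw [hcr]; rfl
  have hcr₂ : (c * der^[3] r).1 (φ.1 x) =
      (der^[2] c * der r - 2 * der (der r * der c)).1 (φ.1 x) := by
    rw [smoothFun.mul_der_three_of_mul_der_eq_one hcr]
  rw [smoothFun.iteratedDeriv_two_div _ _ (left_ne_zero_of_mul_eq_one hn),
    inv_eq_of_mul_eq_one_right hn] at hf₁
  simp only [euler_stringTwo, density_sub, density_add, density_smul, density_mul, density_X,
    density_T, density_fn, density_U, density_ofNat,
    density_jetsAt_quadVar_mul_der_three hcr hm hφ, jetsAt, iteratedDeriv_zero, iteratedDeriv_one,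
    hf₁]
  change _ * (_ + 2 * (c * der^[3] r).1 (φ.1 x) * (der φ).1 x + _ - _) - _ = 0
  simp only [Function.iterate_succ, Function.iterate_zero, Function.comp_apply, id_eq,
    AddSubgroupClass.coe_sub, MulMemClass.coe_mul, Pi.sub_apply, Pi.mul_apply,
    smoothFun.coe_ofNat] at hcr₀ hcr₂ ⊢
  linear_combination
    (1 / 2 * (der (der (der m))).1 (φ.1 x) * (der φ).1 x ^ 2 -
      (der (der m)).1 (φ.1 x) ^ 2 * (der φ).1 x ^ 3) * hcr₀ + 1 / 2 * (der φ).1 x * hcr₂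

theorem iteratedDeriv_EulerOpXT_SfFam_eq_zero (p s q e f₂ : smoothFun) {c r f f₁ m φ : smoothFun}
    (hcr : c * der r = 1) (hm : c * der f = m) {x : ℝ} (hφ : ∀ᶠ y in 𝓝 x, m.1 (φ.1 y) = y)
    (hf₁ : (der f₁).1 (φ.1 x) = 1 / 2 * (der r).1 (φ.1 x) *
      iteratedDeriv 2 (fun z => c.1 z / (der m).1 z) (φ.1 x)) {j : ℕ} (hj : j < 4) :
    iteratedDeriv j (fun ε => EulerOpXT (SfFam c.1 p.1 s.1 r.1 q.1 e.1 f.1 f₁.1 f₂.1 ε) x 0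
      (jetsAt φ.1 x)) 0 = 0 := by
  simp only [SfFam_eq_density, EulerOpXT_density, map_add euler, map_smul euler, density_add,
    density_smul, density_euler_stringZero_eq_zero hcr hm hφ.self_of_nhds,
    density_euler_stringTwo_eq_zero hcr hm hφ hf₁, mul_zero, zero_add]
  exact iteratedDeriv_pow_mul_eq_zero hj contDiff_const

end diffPoly

/-- Proposition 2.4: (a) for arbitrary smooth `f, f₁, f₂` (and `e`), the
functional `S_f = S₀ − H^ε_f` is conserved up to `O(ε⁴)` along (eveq); (b) if `f` is a
local inverse of the initial data via `c(φ(x))·f'(φ(x)) = x` and `f₁` satisfies the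
explicit ODE, then the variational derivative of `S_f` at `t = 0`, `u = φ(x)` is
`O(ε⁴)`: its `ε⁰`- and `ε²`-coefficients vanish on `(x₋, x₊)`. -/
theorem string_functional_eps2
    (h c p s : ℝ → ℝ)
    (hh : ContDiff ℝ (⊤ : ℕ∞) h) (hc : ContDiff ℝ (⊤ : ℕ∞) c)
    (hp : ContDiff ℝ (⊤ : ℕ∞) p) (hs : ContDiff ℝ (⊤ : ℕ∞) s)
    (hc0 : ∀ w, c w ≠ 0)
    (hh3 : ∃ w, iteratedDeriv 3 h w ≠ 0)
    (r q e : ℝ → ℝ)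
    (hr : ContDiff ℝ (⊤ : ℕ∞) r) (hq : ContDiff ℝ (⊤ : ℕ∞) q)
    (he : ContDiff ℝ (⊤ : ℕ∞) e)
    (hr' : ∀ w, deriv r w = 1 / c w)
    (hq' : ∀ w, deriv q w = iteratedDeriv 2 h w / c w) :
    (∀ f f₁ f₂ : ℝ → ℝ, ContDiff ℝ (⊤ : ℕ∞) f → ContDiff ℝ (⊤ : ℕ∞) f₁ →
        ContDiff ℝ (⊤ : ℕ∞) f₂ →
        ConservedUpTo c p s h (SfFam c p s r q e f f₁ f₂) 4)
    ∧ (∀ f f₁ f₂ : ℝ → ℝ, ContDiff ℝ (⊤ : ℕ∞) f → ContDiff ℝ (⊤ : ℕ∞) f₁ →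
        ContDiff ℝ (⊤ : ℕ∞) f₂ →
        ∀ (φ : ℝ → ℝ) (xm xp : ℝ), ContDiff ℝ (⊤ : ℕ∞) φ → xm < xp →
        (StrictMonoOn φ (Set.Ioo xm xp) ∨ StrictAntiOn φ (Set.Ioo xm xp)) →
        (∀ x ∈ Set.Ioo xm xp, c (φ x) ≠ 0) →
        (∀ x ∈ Set.Ioo xm xp, c (φ x) * deriv f (φ x) = x) →
        (∀ w : ℝ, deriv f₁ w = 1 / (2 * c w)
          * iteratedDeriv 2 (fun z => c z / deriv (fun y => c y * deriv f y) z) w) →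
        ∀ x ∈ Set.Ioo xm xp, ∀ j < 4,
          iteratedDeriv j (fun ε =>
            EulerOpXT (SfFam c p s r q e f f₁ f₂ ε) x 0 (jetsAt φ x)) 0 = 0) := by
  lift h to smoothFun using hh
  lift c to smoothFun using hc
  lift p to smoothFun using hp
  lift s to smoothFun using hs
  lift r to smoothFun using hr
  lift q to smoothFun using hq
  lift e to smoothFun using he
  have hcr : c * der r = 1 := Subtype.ext <| funext fun w =>
    (congrArg (c.1 w * ·) (hr' w)).trans (mul_one_div_cancel (hc0 w))
  have hdq : der q = der^[2] h * der r := Subtype.ext <| funext fun w => by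
    change deriv q.1 w = (der^[2] h).1 w * deriv r.1 w
    rw [smoothFun.coe_iterate_der, hq', hr', mul_one_div]
  constructor <;> intro f f₁ f₂ hf hf₁ hf₂ <;> lift f to smoothFun using hf <;>
    lift f₁ to smoothFun using hf₁ <;> lift f₂ to smoothFun using hf₂
  · exact diffPoly.conservedUpTo_SfFam e f f₁ f₂ hcr hdq
  · intro φ xm xp hφ _ _ _ hfφ hdf₁ x hx j hj
    lift φ to smoothFun using hφ
    refine diffPoly.iteratedDeriv_EulerOpXT_SfFam_eq_zero p s q e f₂ hcr rfl
      (eventually_of_mem (isOpen_Ioo.mem_nhds hx) hfφ) ((hdf₁ (φ.1 x)).trans ?_) hj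
    rw [← one_div_mul_one_div, ← hr']
    rfl
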